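/- Let M_1 = (V, I_1), …, M_k = (V, I_k) be k matroids over a common finite ground set V, let (S_1, …, S_k) be a partition of S ⊆ V with S_i ∈ I_i for all i ∈ [k], and let s, v₁, …, v_{l−1}, t_j be a shortest (s, T)-path in the compressed exchange graph G(S_1, …, S_k) (so v₁ ∈ V \ S and v₂, …, v_{l−1} ∈ S). For v ∈ S let π(v) be the index with v ∈ S_{π(v)}. Define (S'_1, …, S'_k) from (S_1, …, S_k) by setting, for each a = 1, …, l−2, S'_{π(v_{a+1})} := S_{π(v_{a+1})} + v_a − v_{a+1} (leaving other parts unchanged by these steps), and finally adding v_{l−1} to the part with index j. Then S'_i ∈ I_i for all i ∈ [k] and (S'_1, …, S'_k) is a partition of S + v₁. -/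

import Mathlib

/-- A matroid on a finite ground set `V`, given by its family of independent sets. -/
structure FinMatroid (V : Type*) [DecidableEq V] [Fintype V] where
  Indep : Finset V → Prop
  indep_empty : Indep ∅
  indep_subset : ∀ ⦃S T : Finset V⦄, Indep S → T ⊆ S → Indep T
  indep_aug : ∀ ⦃S T : Finset V⦄, Indep S → Indep T → T.card < S.card →
    ∃ x ∈ S \ T, Indep (insert x T)

/-- `S` is partitionable w.r.t. the matroids `M i`: it can be partitioned into
sets `P i` with `P i` independent in `M i`. -/
def Partitionable {V ι : Type*} [DecidableEq V] [Fintype V] [DecidableEq ι] [Fintype ι]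
    (M : ι → FinMatroid V) (S : Finset V) : Prop :=
  ∃ P : ι → Finset V, (∀ i, (M i).Indep (P i)) ∧
    (∀ i j, i ≠ j → Disjoint (P i) (P j)) ∧ Finset.univ.biUnion P = S

/-- `reachIn Adj n x y` : there is a directed walk with exactly `n` edges from `x` to `y`. -/
def reachIn {α : Type*} (Adj : α → α → Prop) : ℕ → α → α → Prop
  | 0, x, y => x = y
  | n + 1, x, y => ∃ z, Adj x z ∧ reachIn Adj n z y

/-- Distance (number of edges of a shortest directed path) from `x` to `y`; `⊤` if none. -/
noncomputable def ddist {α : Type*} (Adj : α → α → Prop) (x y : α) : ℕ∞ :=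
  sInf {n : ℕ∞ | ∃ m : ℕ, n = (m : ℕ∞) ∧ reachIn Adj m x y}

/-- Vertices of the compressed exchange graph: ground elements, a source `src`,
and one sink `snk i` for each index `i`. -/
inductive CVert (V ι : Type*) where
  | elt : V → CVert V ι
  | src : CVert V ι
  | snk : ι → CVert V ι

/-- The compressed exchange graph `G(S₁, …, S_k)` relative to the partition `P`. -/
def compAdj {V ι : Type*} [DecidableEq V] [Fintype V] [DecidableEq ι] [Fintype ι]
    (M : ι → FinMatroid V) (P : ι → Finset V) : CVert V ι → CVert V ι → Prop
  | CVert.elt v, CVert.elt u =>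
      ∃ i, u ∈ P i ∧ ¬ (M i).Indep (insert v (P i)) ∧
        (M i).Indep (insert v ((P i).erase u))
  | CVert.src, CVert.elt v => v ∉ Finset.univ.biUnion P
  | CVert.elt v, CVert.snk i => v ∉ P i ∧ (M i).Indep (insert v (P i))
  | _, _ => False

/-- The result of the procedure `Update`: augmenting the partition `P` along the path
`s, v₁, …, v_{l−1}, t_j` (where `π` gives the index of the part containing each element):
for `a = 1, …, l−2` the part of `v_{a+1}` gets `+ v_a − v_{a+1}`, and finally `v_{l−1}`
is added to part `j`. -/
def updatePartition {V ι : Type*} [DecidableEq V] [DecidableEq ι]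
    (P : ι → Finset V) (π : V → ι) (vs : List V) (hne : vs ≠ []) (j : ι) :
    ι → Finset V := fun i =>
  ((P i) \ (vs.tail.filter (fun v => π v = i)).toFinset)
    ∪ (((vs.zip vs.tail).filter (fun p => π p.2 = i)).map Prod.fst).toFinset
    ∪ (if i = j then {vs.getLast hne} else ∅)

/-!
Fix a part `P i` and list, in path order, the exchanges `P i + v_a - v_{a+1}` prescribed for it. Each
of them alone preserves independence, and a path without shortcuts makes the list triangular: an
earlier `v_a` cannot replace a later `v_{b+1}`. Performing the exchanges from the last to the first
therefore keeps the set independent, because each one preserves the triangularity of those still to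
be performed. The final augmentation `P j + v_{l-1}` fits the same pattern as the trivial exchange
`(v_{l-1}, v_{l-1})` at the end of the list of part `j`: an edge `v_a → v_{a+1}` into part `j` requires
`P j + v_a` to be dependent. A shortest path has no shortcuts.
-/

section ShortestPath

variable {α : Type*} {R : α → α → Prop} {w : List α}

/-- The walk `w` has no shortcut: no `R`-edge leads from one of its entries to another that is more
than one place further along. -/
def NoShortcut (R : α → α → Prop) (w : List α) : Prop :=
  ∀ (a b : ℕ) (hab : a + 1 < b) (hb : b < w.length), ¬ R w[a] w[b]

theorem reachIn_of_isChain : ∀ {w : List α} (hw : w ≠ []), w.IsChain R →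
    reachIn R (w.length - 1) (w.head hw) (w.getLast hw)
  | [_], _, _ => rfl
  | _ :: y :: l, _, h =>
    ⟨y, List.isChain_cons_cons.1 h |>.1,
      reachIn_of_isChain (List.cons_ne_nil y l) (List.isChain_cons_cons.1 h).2⟩

theorem isChain_take_append_drop (hw : w.IsChain R) {a b : ℕ} (ha : a < w.length)
    (hb : b < w.length) (hab : R w[a] w[b]) :
    (w.take (a + 1) ++ w.drop b).IsChain R := by
  refine List.isChain_append.2 ⟨hw.take _, hw.drop _, fun x hx y hy => ?_⟩
  have hxa : w[a] = x := by simpa [List.getLast?_take, ha] using hx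
  have hyb : w[b] = y := by simpa [hb] using hy
  exact hxa ▸ hyb ▸ hab

theorem noShortcut_of_le_ddist (hne : w ≠ []) (hw : w.IsChain R)
    (hmin : ((w.length - 1 : ℕ) : ℕ∞) ≤ ddist R (w.head hne) (w.getLast hne)) :
    NoShortcut R w := by
  intro a b hab hb hR
  have hshort := reachIn_of_isChain (by simp [hne]) (isChain_take_append_drop hw (by lia) hb hR)
  rw [List.head_append_of_ne_nil (by simp [hne]), List.head_take,
    List.getLast_append_of_ne_nil (by simp [hb]) (by simpa using hb), List.getLast_drop] at hshort
  have hle := hmin.trans (sInf_le ⟨_, rfl, hshort⟩)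
  simp only [List.length_append, List.length_take, List.length_drop, Nat.cast_le] at hle
  lia

theorem NoShortcut.pairwise_zip_tail (hw : NoShortcut R w) :
    (w.zip w.tail).Pairwise fun p q => ¬ R p.1 q.2 := by
  refine List.pairwise_iff_getElem.2 fun a b _ hb hab => ?_
  simp only [List.length_zip, List.length_tail] at hb
  simpa only [List.getElem_zip, List.getElem_tail] using hw a (b + 1) (by lia) (by lia)

theorem isChain_iff_forall_mem_zip_tail :
    w.IsChain R ↔ ∀ p ∈ w.zip w.tail, R p.1 p.2 := by
  induction w with
  | nil => simp
  | cons x l ih => cases l <;> simp_all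

theorem NoShortcut.nodup (hw : NoShortcut R w) (hne : w ≠ []) (hchain : w.IsChain R)
    (hhead : ∀ x, ¬ R x (w.head hne)) : w.Nodup := by
  have hedge := List.isChain_iff_getElem.1 hchain
  refine List.pairwise_iff_getElem.2 fun a b ha hb hab heq => ?_
  obtain _ | a := a
  · obtain ⟨b, rfl⟩ := Nat.exists_eq_add_one.2 hab
    exact hhead _ (w.head_eq_getElem hne ▸ heq ▸ hedge b hb)
  · exact hw a b hab hb (heq ▸ hedge a ha)

end ShortestPath

section ExchangeAll

variable {V : Type*} [DecidableEq V] {I : Finset V} {L : List (V × V)} {x y : V}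

/-- The result of performing on `I` all the exchanges of `L`, where `(x, y)` stands for the exchange
that adds `x` and removes `y`. -/
def exchangeAll (I : Finset V) (L : List (V × V)) : Finset V :=
  I \ (L.map Prod.snd).toFinset ∪ (L.map Prod.fst).toFinset

theorem exchangeAll_concat_subset (hx : ∀ p ∈ L, x ≠ p.2) :
    exchangeAll I (L ++ [(x, y)]) ⊆ exchangeAll (insert x (I.erase y)) L := by
  intro e he
  simp only [exchangeAll, Finset.mem_union, Finset.mem_sdiff, List.mem_toFinset, List.mem_map,
    List.mem_append, List.mem_singleton, Finset.mem_insert, Finset.mem_erase] at he ⊢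
  grind

end ExchangeAll

namespace FinMatroid

variable {V : Type*} [DecidableEq V] [Fintype V] {M : FinMatroid V} {I : Finset V}
  {L : List (V × V)} {x y z : V}

-- Augment the set `I - y - z + x` from `I`: the new element can only be `y` or `z`.
theorem indep_insert_erase_or (hI : M.Indep I) (h : M.Indep (insert x ((I.erase y).erase z))) :
    M.Indep (insert x (I.erase y)) ∨ M.Indep (insert x (I.erase z)) := by
  by_cases hcard : (insert x ((I.erase y).erase z)).card < I.card
  · obtain ⟨e, he, hind⟩ := M.indep_aug hI h hcard
    obtain rfl | rfl : e = y ∨ e = z := by grind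
    · exact .inr (M.indep_subset hind (by grind))
    · exact .inl (M.indep_subset hind (by grind))
  · have hle := (not_lt.1 hcard).trans (Finset.card_insert_le _ _)
    by_cases hz : z ∈ I.erase y
    · have hy : y ∉ I := fun hy => by
        have := Finset.card_erase_add_one hz
        have := Finset.card_erase_add_one hy
        lia
      exact .inr (by rwa [Finset.erase_eq_of_notMem hy] at h)
    · exact .inl (by rwa [Finset.erase_eq_of_notMem hz] at h)

/-- A list of exchanges `(x, y)`, each adding some `x ∉ I` to `I` and removing `y`, such that each
exchange alone yields an independent set while no element added by an earlier exchange can replace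
an element removed by a later one. An entry with `y ∉ I` stands for the augmentation `I + x`. -/
structure IsTriangularExchange (M : FinMatroid V) (I : Finset V) (L : List (V × V)) : Prop where
  notMem : ∀ p ∈ L, p.1 ∉ I
  indep : ∀ p ∈ L, M.Indep (insert p.1 (I.erase p.2))
  not_indep : L.Pairwise fun p q => ¬ M.Indep (insert p.1 (I.erase q.2))

namespace IsTriangularExchange

theorem indep_last (h : M.IsTriangularExchange I (L ++ [(x, y)])) :
    M.Indep (insert x (I.erase y)) :=
  h.indep _ List.mem_concat_self

theorem not_indep_last (h : M.IsTriangularExchange I (L ++ [(x, y)])) {p : V × V} (hp : p ∈ L) :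
    ¬ M.Indep (insert p.1 (I.erase y)) :=
  (List.pairwise_append.1 h.not_indep).2.2 p hp (x, y) (List.mem_singleton_self _)

theorem last_ne_snd (h : M.IsTriangularExchange I (L ++ [(x, y)])) {p : V × V} (hp : p ∈ L) :
    x ≠ p.2 := by
  rintro rfl
  have hxI : p.2 ∉ I := h.notMem _ List.mem_concat_self
  have hindep : M.Indep (insert p.1 (I.erase p.2)) := h.indep p (List.mem_append_left _ hp)
  rw [Finset.erase_eq_of_notMem hxI] at hindep
  exact h.not_indep_last hp
    (M.indep_subset hindep (Finset.insert_subset_insert _ (Finset.erase_subset _ _)))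

theorem dropLast (hI : M.Indep I) (h : M.IsTriangularExchange I (L ++ [(x, y)])) :
    M.IsTriangularExchange (insert x (I.erase y)) L where
  notMem p hp hmem := by
    obtain hpx | hpI := Finset.mem_insert.1 hmem
    · exact h.not_indep_last hp (hpx ▸ h.indep_last)
    · exact h.notMem p (List.mem_append_left _ hp) (Finset.mem_of_mem_erase hpI)
  indep p hp := by
    have hxI : x ∉ I := h.notMem _ List.mem_concat_self
    have hboth : M.Indep (insert p.1 (((insert x (I.erase y)).erase p.2).erase x)) :=
      M.indep_subset (h.indep p (List.mem_append_left _ hp)) (by grind)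
    refine (indep_insert_erase_or h.indep_last hboth).resolve_right fun hx => ?_
    exact h.not_indep_last hp (M.indep_subset hx (by grind))
  not_indep := by
    refine (List.pairwise_append.1 h.not_indep).1.imp_of_mem fun {p q} hp _ hpq hindep => ?_
    have hboth : M.Indep (insert p.1 ((I.erase y).erase q.2)) :=
      M.indep_subset hindep (by grind)
    exact (indep_insert_erase_or hI hboth).elim (h.not_indep_last hp) hpq

theorem indep_exchangeAll (hI : M.Indep I) (h : M.IsTriangularExchange I L) :
    M.Indep (exchangeAll I L) := by
  induction L using List.reverseRecOn generalizing I with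
  | nil => simpa [exchangeAll] using hI
  | append_singleton L p ih =>
    exact M.indep_subset (ih h.indep_last (h.dropLast hI))
      (exchangeAll_concat_subset fun _ => h.last_ne_snd)

end IsTriangularExchange

end FinMatroid

theorem mem_iff_eq_head_or_mem_tail {α : Type*} {l : List α} {x : α} (hne : l ≠ []) :
    x ∈ l ↔ x = l.head hne ∨ x ∈ l.tail := by
  rw [← List.mem_cons, List.cons_head_tail]

section Destinations

variable {V ι : Type*} {π : V → ι} {vs : List V} {j : ι}

/-- The indices of the parts that receive the vertices of `vs` in the update: `v_a` goes to the part
of `v_{a+1}`, and the last vertex to part `j`. -/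
def destinations (π : V → ι) (vs : List V) (j : ι) : List ι :=
  vs.tail.map π ++ [j]

theorem zip_destinations (hne : vs ≠ []) :
    vs.zip (destinations π vs j) =
      (vs.zip vs.tail).map (Prod.map id π) ++ [(vs.getLast hne, j)] := by
  unfold destinations
  induction vs with
  | nil => contradiction
  | cons x l ih => cases l <;> simp_all

theorem map_fst_zip_destinations :
    (vs.zip (destinations π vs j)).map Prod.fst = vs :=
  List.map_fst_zip (by grind [destinations])

end Destinations

section Update

variable {V ι : Type*} [DecidableEq V] [DecidableEq ι] {P : ι → Finset V} {π : V → ι}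
  {vs : List V} {hne : vs ≠ []} {i j : ι} {x : V}

/-- The exchanges that the update along `vs` prescribes for part `i`, in path order. The
augmentation of part `j` by the last vertex `v` is encoded as the exchange `(v, v)`. -/
def partExchanges (π : V → ι) (vs : List V) (hne : vs ≠ []) (j i : ι) : List (V × V) :=
  (vs.zip vs.tail).filter (fun p => π p.2 = i) ++
    if i = j then [(vs.getLast hne, vs.getLast hne)] else []

theorem updatePartition_eq_exchangeAll :
    updatePartition P π vs hne j i = exchangeAll (P i) (partExchanges π vs hne j i) := by
  have hsnd : ((vs.zip vs.tail).filter (fun p => π p.2 = i)).map Prod.snd =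
      vs.tail.filter (fun v => π v = i) := by
    conv_rhs => rw [← List.map_snd_zip (l₁ := vs) (l₂ := vs.tail) (by simp), List.filter_map]
    rfl
  rw [updatePartition, exchangeAll, partExchanges, List.map_append, List.map_append, hsnd]
  split_ifs
  · ext x
    simp only [Finset.mem_union, Finset.mem_sdiff, Finset.mem_singleton, List.toFinset_append,
      List.map_cons, List.map_nil, List.toFinset_cons, List.toFinset_nil, insert_empty_eq]
    tauto
  · simp

theorem mem_updatePartition (hπ : ∀ i, ∀ v ∈ P i, π v = i) (hhead : ∀ i, vs.head hne ∉ P i) :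
    x ∈ updatePartition P π vs hne j i ↔
      (x ∈ P i ∧ x ∉ vs) ∨ (x, i) ∈ vs.zip (destinations π vs j) := by
  have hkept : x ∈ P i → ((x ∈ vs.tail → π x ≠ i) ↔ x ∉ vs) := by
    grind [mem_iff_eq_head_or_mem_tail hne (x := x)]
  have hlast : x ∈ (if i = j then {vs.getLast hne} else ∅ : Finset V) ↔
      x = vs.getLast hne ∧ i = j := by
    split_ifs <;> simp_all
  rw [zip_destinations hne, List.mem_append, List.mem_singleton, Prod.mk.injEq, ← hlast]
  simp only [updatePartition, Finset.union_assoc, Finset.mem_union, Finset.mem_sdiff,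
    List.mem_toFinset, List.mem_filter, List.mem_map, decide_eq_true_eq, not_and,
    Prod.exists, Prod.map_apply, id_eq, Prod.mk.injEq, exists_and_right, exists_eq_right]
  grind

theorem disjoint_updatePartition (hπ : ∀ i, ∀ v ∈ P i, π v = i)
    (hhead : ∀ i, vs.head hne ∉ P i) (hnd : vs.Nodup) {i' : ι} (hii' : i ≠ i') :
    Disjoint (updatePartition P π vs hne j i) (updatePartition P π vs hne j i') := by
  refine Finset.disjoint_left.2 fun x hx hx' => hii' ?_
  rw [mem_updatePartition hπ hhead] at hx hx'
  have hfst := map_fst_zip_destinations (π := π) (vs := vs) (j := j)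
  obtain ⟨hxi, hxvs⟩ | hxi := hx <;> obtain ⟨hxi', hxvs'⟩ | hxi' := hx'
  · exact (hπ i x hxi).symm.trans (hπ i' x hxi')
  · exact absurd (List.of_mem_zip hxi').1 hxvs
  · exact absurd (List.of_mem_zip hxi).1 hxvs'
  · exact congrArg Prod.snd (List.inj_on_of_nodup_map (hfst.symm ▸ hnd) hxi hxi' rfl)

theorem biUnion_updatePartition [Fintype ι] (hπ : ∀ i, ∀ v ∈ P i, π v = i)
    (hhead : ∀ i, vs.head hne ∉ P i) (htail : ∀ v ∈ vs.tail, ∃ i, v ∈ P i) :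
    Finset.univ.biUnion (updatePartition P π vs hne j) =
      insert (vs.head hne) (Finset.univ.biUnion P) := by
  ext x
  have hvs : (∃ i, (x, i) ∈ vs.zip (destinations π vs j)) ↔ x ∈ vs := by
    conv_rhs => rw [← map_fst_zip_destinations (π := π) (vs := vs) (j := j)]
    simp
  have hcons := mem_iff_eq_head_or_mem_tail (x := x) hne
  simp only [Finset.mem_biUnion, Finset.mem_univ, true_and, Finset.mem_insert,
    mem_updatePartition hπ hhead, exists_or, exists_and_right, hvs]
  grind

end Update

section ExchangeGraph

variable {V ι : Type*} [DecidableEq V] [Fintype V] [DecidableEq ι] [Fintype ι]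
  {M : ι → FinMatroid V} {P : ι → Finset V} {π : V → ι} {vs : List V} {i j : ι}

theorem compAdj_elt_elt_iff (hπ : ∀ i, ∀ v ∈ P i, π v = i) {v u : V} :
    compAdj M P (.elt v) (.elt u) ↔
      u ∈ P (π u) ∧ ¬ (M (π u)).Indep (insert v (P (π u))) ∧
        (M (π u)).Indep (insert v ((P (π u)).erase u)) :=
  ⟨fun ⟨i, hi⟩ => (hπ i u hi.1).symm ▸ hi, fun h => ⟨π u, h⟩⟩

theorem isChain_compAdj_iff (hne : vs ≠ []) :
    List.IsChain (compAdj M P) (.src :: (vs.map .elt ++ [.snk j])) ↔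
      (∀ i, vs.head hne ∉ P i) ∧
      (∀ p ∈ vs.zip vs.tail, compAdj M P (.elt p.1) (.elt p.2)) ∧
      vs.getLast hne ∉ P j ∧ (M j).Indep (insert (vs.getLast hne) (P j)) := by
  rw [← isChain_iff_forall_mem_zip_tail (R := fun v u => compAdj M P (.elt v) (.elt u)),
    List.isChain_cons, List.isChain_append, List.isChain_map]
  simp [List.head?_eq_some_head hne, List.getLast?_eq_some_getLast hne, compAdj]

theorem isTriangularExchange_partExchanges (hne : vs ≠ []) (hind : (M i).Indep (P i))
    (hπ : ∀ i, ∀ v ∈ P i, π v = i)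
    (hchain : List.IsChain (compAdj M P) (.src :: (vs.map .elt ++ [.snk j])))
    (hshortcut : NoShortcut (fun v u => compAdj M P (.elt v) (.elt u)) vs) :
    (M i).IsTriangularExchange (P i) (partExchanges π vs hne j i) := by
  obtain ⟨-, hedge, hlast, hlast_indep⟩ := (isChain_compAdj_iff hne).1 hchain
  have hinner : ∀ p ∈ (vs.zip vs.tail).filter (fun p => π p.2 = i), p.2 ∈ P i ∧
      ¬ (M i).Indep (insert p.1 (P i)) ∧ (M i).Indep (insert p.1 ((P i).erase p.2)) := by
    intro p hp
    obtain ⟨hpath, rfl⟩ : p ∈ vs.zip vs.tail ∧ π p.2 = i := by simpa using hp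
    exact (compAdj_elt_elt_iff hπ).1 (hedge p hpath)
  have hfinal : ∀ p ∈ (if i = j then [(vs.getLast hne, vs.getLast hne)] else []),
      p.1 ∉ P i ∧ p.2 ∉ P i ∧ (M i).Indep (insert p.1 (P i)) := by
    split_ifs with hij <;> simp [hij, hlast, hlast_indep]
  refine ⟨fun p hp => ?_, fun p hp => ?_, List.pairwise_append.2 ⟨?_, ?_, fun p hp q hq => ?_⟩⟩
  · obtain hp | hp := List.mem_append.1 hp
    · exact fun hmem => (hinner p hp).2.1 (by rw [Finset.insert_eq_of_mem hmem]; exact hind)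
    · exact (hfinal p hp).1
  · obtain hp | hp := List.mem_append.1 hp
    · exact (hinner p hp).2.2
    · exact (Finset.erase_eq_of_notMem (hfinal p hp).2.1).symm ▸ (hfinal p hp).2.2
  · exact (hshortcut.pairwise_zip_tail.filter _).imp_of_mem fun hp hq hpq hindep =>
      hpq ⟨i, (hinner _ hq).1, (hinner _ hp).2.1, hindep⟩
  · split_ifs <;> simp
  · exact (Finset.erase_eq_of_notMem (hfinal q hq).2.1).symm ▸ (hinner p hp).2.1

theorem noShortcut_elt_of_le_ddist
    (hchain : List.IsChain (compAdj M P) (.src :: (vs.map .elt ++ [.snk j])))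
    (hshort : ((vs.length + 1 : ℕ) : ℕ∞) ≤ ddist (compAdj M P) .src (.snk j)) :
    NoShortcut (fun v u => compAdj M P (.elt v) (.elt u)) vs := by
  have hpath := noShortcut_of_le_ddist (List.cons_ne_nil _ _) hchain (by simpa using hshort)
  intro a b hab hb
  have hb' : b + 1 < (CVert.src :: (vs.map CVert.elt ++ [CVert.snk j])).length := by grind
  have hab' := hpath (a + 1) (b + 1) (by lia) hb'
  rw [List.getElem_cons_succ, List.getElem_cons_succ, List.getElem_append_left (by grind),
    List.getElem_append_left (by simpa using hb), List.getElem_map, List.getElem_map] at hab'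
  exact hab'

theorem update_correct_general (hind : ∀ i, (M i).Indep (P i)) (hπ : ∀ i, ∀ v ∈ P i, π v = i)
    (hne : vs ≠ [])
    (hchain : List.IsChain (compAdj M P) (.src :: (vs.map .elt ++ [.snk j])))
    (hshortcut : NoShortcut (fun v u => compAdj M P (.elt v) (.elt u)) vs) :
    (∀ i, (M i).Indep (updatePartition P π vs hne j i)) ∧
    (∀ i i', i ≠ i' →
      Disjoint (updatePartition P π vs hne j i) (updatePartition P π vs hne j i')) ∧
    Finset.univ.biUnion (updatePartition P π vs hne j) =
      insert (vs.head hne) (Finset.univ.biUnion P) := by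
  obtain ⟨hhead, hedge, -⟩ := (isChain_compAdj_iff hne).1 hchain
  have hnd : vs.Nodup := hshortcut.nodup hne (isChain_iff_forall_mem_zip_tail.2 hedge)
    fun _ ⟨i, hi, _⟩ => hhead i hi
  refine ⟨fun i => ?_, fun i i' => disjoint_updatePartition hπ hhead hnd,
    biUnion_updatePartition hπ hhead fun u hu => ?_⟩
  · rw [updatePartition_eq_exchangeAll]
    exact (isTriangularExchange_partExchanges hne (hind i) hπ hchain hshortcut).indep_exchangeAll
      (hind i)
  · rw [← List.map_snd_zip (l₁ := vs) (l₂ := vs.tail) (by simp)] at hu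
    obtain ⟨p, hp, rfl⟩ := List.mem_map.1 hu
    exact ⟨_, ((compAdj_elt_elt_iff hπ).1 (hedge p hp)).1⟩

end ExchangeGraph

/-- Correctness of `Update`: augmenting along a shortest `(s,T)`-path of the compressed
exchange graph produces a partition of `S + v₁` into independent sets. -/
theorem update_correct {V ι : Type*} [DecidableEq V] [Fintype V]
    [DecidableEq ι] [Fintype ι] (M : ι → FinMatroid V) (P : ι → Finset V) (S : Finset V)
    (hind : ∀ i, (M i).Indep (P i)) (hdisj : ∀ i j, i ≠ j → Disjoint (P i) (P j))
    (hS : Finset.univ.biUnion P = S)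
    (π : V → ι) (hπ : ∀ i, ∀ v ∈ P i, π v = i)
    (j : ι) (vs : List V) (hne : vs ≠ []) (hnd : vs.Nodup)
    (hchain : List.Chain' (compAdj M P)
      (CVert.src :: (vs.map CVert.elt ++ [CVert.snk j])))
    (hshort : (⨅ i : ι, ddist (compAdj M P) CVert.src (CVert.snk i))
      = ((vs.length + 1 : ℕ) : ℕ∞)) :
    (∀ i, (M i).Indep (updatePartition P π vs hne j i)) ∧
    (∀ i i', i ≠ i' →
      Disjoint (updatePartition P π vs hne j i) (updatePartition P π vs hne j i')) ∧
    Finset.univ.biUnion (updatePartition P π vs hne j) = insert (vs.head hne) S := by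
  subst hS
  exact update_correct_general hind hπ hne hchain
    (noShortcut_elt_of_le_ddist hchain (hshort ▸ iInf_le _ j))
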